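/- (MacDuffee) Let A be an m×n complex matrix of rank k > 0 with a full-rank factorization A = B·D, where B is an m×k complex matrix with rank(B) = k and D is a k×n complex matrix with rank(D) = k. Then the k×k matrix Bᴴ·A·Dᴴ is invertible, and the matrix Dᴴ·(Bᴴ·A·Dᴴ)⁻¹·Bᴴ is a Moore–Penrose pseudoinverse of A. -/

import Mathlib

open Matrix

/-- `Z` is a Moore–Penrose pseudoinverse of `M`: it satisfies the four Penrose equations. -/
def IsMoorePenrose {m n : ℕ} (M : Matrix (Fin m) (Fin n) ℂ)
    (Z : Matrix (Fin n) (Fin m) ℂ) : Prop :=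
  M * Z * M = M ∧ Z * M * Z = Z ∧ (M * Z)ᴴ = M * Z ∧ (Z * M)ᴴ = Z * M

/-!
A left inverse `L` of `B` with `B * L` Hermitian and a right inverse `S` of `D` with `S * D`
Hermitian combine to the pseudoinverse `S * L` of `B * D`, because `(B * D) * (S * L) = B * L` and
`(S * L) * (B * D) = S * D`. For `B` of full column rank and `D` of full row rank, the Gram matrices
`Bᴴ * B` and `D * Dᴴ` are invertible, so one can take `L = (Bᴴ * B)⁻¹ * Bᴴ` and
`S = Dᴴ * (D * Dᴴ)⁻¹`. MacDuffee's formula is this product `S * L`, since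
`Bᴴ * (B * D) * Dᴴ = (Bᴴ * B) * (D * Dᴴ)`.
-/

section General

variable {m n k R : Type*} [Fintype m] [Fintype n]

/-- The Moore–Penrose pseudoinverse relation for matrices with arbitrary finite index types and
entries in any semiring with a star operation; `IsMoorePenrose` is the case of complex matrices
indexed by `Fin m` and `Fin n`. -/
structure IsMoorePenroseInverse [NonUnitalSemiring R] [Star R]
    (M : Matrix m n R) (Z : Matrix n m R) : Prop where
  mul_inverse_mul : M * Z * M = M
  inverse_mul_inverse : Z * M * Z = Z
  isHermitian_mul_inverse : (M * Z).IsHermitian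
  isHermitian_inverse_mul : (Z * M).IsHermitian

variable [Fintype k] [DecidableEq k]

theorem IsMoorePenroseInverse.mul_of_leftInverse_of_rightInverse [Semiring R] [Star R]
    {B : Matrix m k R} {L : Matrix k m R} {D : Matrix k n R} {S : Matrix n k R}
    (hLB : L * B = 1) (hDS : D * S = 1) (hBL : (B * L).IsHermitian) (hSD : (S * D).IsHermitian) :
    IsMoorePenroseInverse (B * D) (S * L) := by
  have hleft : B * D * (S * L) = B * L := by
    rw [Matrix.mul_assoc, ← Matrix.mul_assoc D, hDS, Matrix.one_mul]
  have hright : S * L * (B * D) = S * D := by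
    rw [Matrix.mul_assoc, ← Matrix.mul_assoc L, hLB, Matrix.one_mul]
  refine ⟨?_, ?_, hleft ▸ hBL, hright ▸ hSD⟩
  · rw [hleft, Matrix.mul_assoc, ← Matrix.mul_assoc L, hLB, Matrix.one_mul]
  · rw [hright, Matrix.mul_assoc, ← Matrix.mul_assoc D, hDS, Matrix.one_mul]

section StarRing

variable [CommRing R] [StarRing R]

theorem isHermitian_mul_gram_inv_mul_conjTranspose (B : Matrix m k R) :
    (B * ((Bᴴ * B)⁻¹ * Bᴴ)).IsHermitian := by
  rw [← Matrix.mul_assoc]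
  exact isHermitian_mul_mul_conjTranspose B (isHermitian_conjTranspose_mul_self B).inv

theorem isHermitian_conjTranspose_mul_gram_inv_mul (D : Matrix k n R) :
    (Dᴴ * (D * Dᴴ)⁻¹ * D).IsHermitian :=
  isHermitian_conjTranspose_mul_mul D (isHermitian_mul_conjTranspose_self D).inv

theorem IsMoorePenroseInverse.mul_of_isUnit_gram {B : Matrix m k R} {D : Matrix k n R}
    (hB : IsUnit (Bᴴ * B)) (hD : IsUnit (D * Dᴴ)) :
    IsMoorePenroseInverse (B * D) (Dᴴ * (D * Dᴴ)⁻¹ * ((Bᴴ * B)⁻¹ * Bᴴ)) := by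
  rw [isUnit_iff_isUnit_det] at hB hD
  have hLB : (Bᴴ * B)⁻¹ * Bᴴ * B = 1 := by rw [Matrix.mul_assoc, nonsing_inv_mul _ hB]
  have hDS : D * (Dᴴ * (D * Dᴴ)⁻¹) = 1 := by rw [← Matrix.mul_assoc, mul_nonsing_inv _ hD]
  exact .mul_of_leftInverse_of_rightInverse hLB hDS
    (isHermitian_mul_gram_inv_mul_conjTranspose B) (isHermitian_conjTranspose_mul_gram_inv_mul D)

end StarRing

theorem isUnit_of_rank_eq_card [Field R] {P : Matrix k k R} (hP : P.rank = Fintype.card k) :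
    IsUnit P := by
  have hrange : LinearMap.range P.mulVecLin = ⊤ :=
    Submodule.eq_top_of_finrank_eq (hP.trans (Module.finrank_fintype_fun_eq_card R).symm)
  exact mulVec_surjective_iff_isUnit.mp (LinearMap.range_eq_top.mp hrange)

section StarOrderedField

variable [Field R] [PartialOrder R] [StarRing R] [StarOrderedRing R]

theorem isUnit_conjTranspose_mul_self_of_rank_eq_card {B : Matrix m k R}
    (hB : B.rank = Fintype.card k) : IsUnit (Bᴴ * B) :=
  isUnit_of_rank_eq_card ((rank_conjTranspose_mul_self B).trans hB)

theorem isUnit_self_mul_conjTranspose_of_rank_eq_card {D : Matrix k n R}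
    (hD : D.rank = Fintype.card k) : IsUnit (D * Dᴴ) :=
  isUnit_of_rank_eq_card ((rank_self_mul_conjTranspose D).trans hD)

theorem macduffee_pseudoinverse_formula_general
    {A : Matrix m n R} {B : Matrix m k R} {D : Matrix k n R}
    (hBD : A = B * D) (hB : B.rank = Fintype.card k) (hD : D.rank = Fintype.card k) :
    IsUnit (Bᴴ * A * Dᴴ) ∧
    IsMoorePenroseInverse A (Dᴴ * (Bᴴ * A * Dᴴ)⁻¹ * Bᴴ) := by
  have hBB : IsUnit (Bᴴ * B) := isUnit_conjTranspose_mul_self_of_rank_eq_card hB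
  have hDD : IsUnit (D * Dᴴ) := isUnit_self_mul_conjTranspose_of_rank_eq_card hD
  have hcore : Bᴴ * A * Dᴴ = Bᴴ * B * (D * Dᴴ) := by simp only [hBD, Matrix.mul_assoc]
  have hformula : Dᴴ * (Bᴴ * A * Dᴴ)⁻¹ * Bᴴ = Dᴴ * (D * Dᴴ)⁻¹ * ((Bᴴ * B)⁻¹ * Bᴴ) := by
    rw [hcore, Matrix.mul_inv_rev]
    simp only [Matrix.mul_assoc]
  refine ⟨hcore ▸ hBB.mul hDD, ?_⟩
  rw [hformula, hBD]
  exact .mul_of_isUnit_gram hBB hDD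

end StarOrderedField

end General

theorem IsMoorePenroseInverse.isMoorePenrose {m n : ℕ} {M : Matrix (Fin m) (Fin n) ℂ}
    {Z : Matrix (Fin n) (Fin m) ℂ} (h : IsMoorePenroseInverse M Z) : IsMoorePenrose M Z :=
  ⟨h.mul_inverse_mul, h.inverse_mul_inverse, h.isHermitian_mul_inverse, h.isHermitian_inverse_mul⟩

theorem macduffee_pseudoinverse_formula
    {m n k : ℕ} (hk : 0 < k)
    (A : Matrix (Fin m) (Fin n) ℂ) (hA : A.rank = k)
    (B : Matrix (Fin m) (Fin k) ℂ) (D : Matrix (Fin k) (Fin n) ℂ)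
    (hBD : A = B * D) (hB : B.rank = k) (hD : D.rank = k) :
    IsUnit (Bᴴ * A * Dᴴ) ∧
    IsMoorePenrose A (Dᴴ * (Bᴴ * A * Dᴴ)⁻¹ * Bᴴ) := by
  open scoped ComplexOrder in
  exact (macduffee_pseudoinverse_formula_general hBD (hB.trans (Fintype.card_fin k).symm)
    (hD.trans (Fintype.card_fin k).symm)).imp_right IsMoorePenroseInverse.isMoorePenrose
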